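/- The set of positive integers k such that 2^k is not separable has lower asymptotic density at least 1/3. -/

import Mathlib

/-!
Let `m` interlock with `2 ^ k`, `k ≥ 4`. Between two divisors of `m` exceeding `1` there is a power
of two, so each dyadic interval contains at most one such divisor (`Interlocking.pow_between`),
while each interval `(2 ^ i, 2 ^ (i + 1))` with `1 ≤ i < k` contains at least one. It follows
that `m` is odd, and that `m` has exactly `k` divisors below `2 ^ k` and at most one above, so
the number `τ(m)` of divisors is `k` or `k + 1` (`Interlocking.card_divisors`).

Looking at the small divisors, `3 ∣ m`, and either `5 ∣ m` or `7 ∣ m`. Comparing pairs such as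
`9, 15` or `75, 125` or `49, 63`, which share a dyadic interval, pins down the exponents of these
primes in `m`: the exponents of `3` and of `5` (or `7`) are `(1, 1)`, `(1, 2)` or `(2, 1)`.
Hence `4 ∣ τ(m)` or `6 ∣ τ(m)` (`Interlocking.four_or_six_dvd`).
If `k ≡ 1, 2, 9, 10 (mod 12)`, neither `k` nor `k + 1` is divisible by `4` or `6`, so `2 ^ k`
is not separable. These four residue classes have density `4 / 12 = 1 / 3`.
-/

open scoped Classical

/-- `(m, n)` is an interlocking pair: both are positive, and between any two
consecutive divisors (the smaller one exceeding 1) of either number there is a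
divisor of the other. -/
def Interlocking (m n : ℕ) : Prop :=
  0 < m ∧ 0 < n ∧
  (∀ d d' : ℕ, d ∣ n → d' ∣ n → 1 < d → d < d' →
    (∀ e : ℕ, e ∣ n → ¬(d < e ∧ e < d')) →
    ∃ e : ℕ, e ∣ m ∧ d < e ∧ e < d') ∧
  (∀ d d' : ℕ, d ∣ m → d' ∣ m → 1 < d → d < d' →
    (∀ e : ℕ, e ∣ m → ¬(d < e ∧ e < d')) →
    ∃ e : ℕ, e ∣ n ∧ d < e ∧ e < d')

/-- A positive integer `n` is separable if some `m` interlocks with it. -/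
def Separable (n : ℕ) : Prop := ∃ m : ℕ, Interlocking m n

/-! ### Divisors of a number interlocking with a power of two -/

/-- Consecutiveness is not needed: any two divisors of `m` exceeding `1` are separated by a power
of two, found between `d` and the divisor of `m` following it. -/
lemma Interlocking.pow_between {m k d d' : ℕ} (h : Interlocking m (2 ^ k)) (hd : d ∣ m)
    (hd' : d' ∣ m) (h1 : 1 < d) (hlt : d < d') : ∃ j ≤ k, d < 2 ^ j ∧ 2 ^ j < d' := by
  have hex : ∃ e, e ∣ m ∧ d < e := ⟨d', hd', hlt⟩
  obtain ⟨hf1, hf2⟩ := Nat.find_spec hex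
  obtain ⟨e, he, h2, h3⟩ := h.2.2.2 d (Nat.find hex) hd hf1 h1 hf2
    (fun e he hlt' => Nat.find_min hex hlt'.2 ⟨he, hlt'.1⟩)
  obtain ⟨j, hj, rfl⟩ := (Nat.dvd_prime_pow Nat.prime_two).1 he
  exact ⟨j, hj, h2, h3.trans_le (Nat.find_min' hex ⟨hd', hlt⟩)⟩

lemma Interlocking.not_both {m k d d' : ℕ} (h : Interlocking m (2 ^ k)) (i : ℕ) (hd : d ∣ m)
    (hd' : d' ∣ m) (h1 : 1 < d) (hlt : d < d') (hl : 2 ^ i ≤ d) (hu : d' ≤ 2 ^ (i + 1)) :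
    False := by
  obtain ⟨j, -, h2, h3⟩ := h.pow_between hd hd' h1 hlt
  have h4 := (Nat.pow_lt_pow_iff_right (by norm_num : 1 < 2)).1 (hl.trans_lt h2)
  have h5 := (Nat.pow_lt_pow_iff_right (by norm_num : 1 < 2)).1 (h3.trans_le hu)
  omega

lemma Interlocking.exists_dvd {m k : ℕ} (h : Interlocking m (2 ^ k)) (i : ℕ) (h1 : 1 ≤ i)
    (hi : i < k) : ∃ e, e ∣ m ∧ 2 ^ i < e ∧ e < 2 ^ (i + 1) := by
  refine h.2.2.1 _ _ (pow_dvd_pow 2 hi.le) (pow_dvd_pow 2 hi)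
    (Nat.one_lt_two_pow (by omega)) (Nat.pow_lt_pow_right (by norm_num) (by omega)) ?_
  rintro e he ⟨h2, h3⟩
  obtain ⟨j, -, rfl⟩ := (Nat.dvd_prime_pow Nat.prime_two).1 he
  have h4 := (Nat.pow_lt_pow_iff_right (by norm_num : 1 < 2)).1 h2
  have h5 := (Nat.pow_lt_pow_iff_right (by norm_num : 1 < 2)).1 h3
  omega

lemma Interlocking.three_dvd {m k : ℕ} (h : Interlocking m (2 ^ k)) (hk : 4 ≤ k) : 3 ∣ m := by
  obtain ⟨e, he, h1, h2⟩ := h.exists_dvd 1 le_rfl (by omega)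
  have : e = 3 := by omega
  exact this ▸ he

lemma Interlocking.not_two_dvd {m k : ℕ} (h : Interlocking m (2 ^ k)) (hk : 4 ≤ k) :
    ¬ 2 ∣ m := fun h2 =>
  h.not_both 1 h2 (h.three_dvd hk) (by norm_num) (by norm_num) (by norm_num) (by norm_num)

/-- The divisors below `2 ^ k` correspond to `0, …, k - 1` via `Nat.log 2`, and at most one
divisor exceeds `2 ^ k`. -/
lemma Interlocking.card_divisors {m k : ℕ} (h : Interlocking m (2 ^ k)) (hk : 4 ≤ k) :
    m.divisors.card = k ∨ m.divisors.card = k + 1 := by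
  have hm : m ≠ 0 := h.1.ne'
  have hsmall : (m.divisors.filter (· < 2 ^ k)).card = k := by
    conv_rhs => rw [← Finset.card_range k]
    refine Finset.card_bij (fun d _ => Nat.log 2 d) ?_ ?_ ?_
    · intro d hd
      simp only [Finset.mem_filter, Nat.mem_divisors] at hd
      exact Finset.mem_range.2 (Nat.log_lt_of_lt_pow
        (ne_zero_of_dvd_ne_zero hm hd.1.1) hd.2)
    · have key : ∀ d d', d ∣ m → d' ∣ m → d < d' → Nat.log 2 d ≠ Nat.log 2 d' := by
        intro d d' hd hd' hlt heq
        have hd0 : d ≠ 0 := ne_zero_of_dvd_ne_zero hm hd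
        have hb := Nat.lt_pow_succ_log_self (b := 2) (by norm_num) d'
        have ha := Nat.pow_log_le_self 2 hd0
        by_cases h1 : 1 < d
        · exact h.not_both _ hd hd' h1 hlt ha (by rw [heq]; exact hb.le)
        · -- `d = 1` forces `d' < 2`
          have : d = 1 := by omega
          subst this
          rw [← heq] at hb
          simp at hb
          omega
      intro d hd d' hd' heq
      simp only [Finset.mem_filter, Nat.mem_divisors] at hd hd'
      rcases lt_trichotomy d d' with hlt | heq' | hlt
      · exact absurd heq (key d d' hd.1.1 hd'.1.1 hlt)
      · exact heq'
      · exact absurd heq.symm (key d' d hd'.1.1 hd.1.1 hlt)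
    · intro i hi
      rw [Finset.mem_range] at hi
      rcases Nat.eq_zero_or_pos i with rfl | hpos
      · exact ⟨1, by simp [hm]; omega, by simp⟩
      · obtain ⟨e, he, h1, h2⟩ := h.exists_dvd i hpos hi
        refine ⟨e, ?_, Nat.log_eq_of_pow_le_of_lt_pow h1.le h2⟩
        simp only [Finset.mem_filter, Nat.mem_divisors]
        exact ⟨⟨he, hm⟩, h2.trans_le (Nat.pow_le_pow_right (by norm_num) hi)⟩
  have hlarge : (m.divisors.filter (¬ · < 2 ^ k)).card ≤ 1 := by
    have key : ∀ d d', d ∣ m → d' ∣ m → 2 ^ k ≤ d → ¬ d < d' := by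
      intro d d' hd hd' hle hlt
      have hk1 : 1 < 2 ^ k := Nat.one_lt_two_pow (by omega)
      obtain ⟨j, hj, h2, -⟩ := h.pow_between hd hd' (hk1.trans_le hle) hlt
      have := Nat.pow_le_pow_right (by norm_num : 0 < 2) hj
      omega
    rw [Finset.card_le_one]
    intro d hd d' hd'
    simp only [Finset.mem_filter, Nat.mem_divisors, not_lt] at hd hd'
    have h1 := key d d' hd.1.1 hd'.1.1 hd.2
    have h2 := key d' d hd'.1.1 hd.1.1 hd'.2
    omega
  have := Finset.card_filter_add_card_filter_not (s := m.divisors) (· < 2 ^ k)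
  omega

/-! ### The number of divisors is a multiple of 4 or 6 -/

lemma mul_dvd_card_divisors {p q e f m : ℕ} (hp : p.Prime) (hq : q.Prime) (hpq : p ≠ q)
    (hpe : p ^ e ∣ m) (hpe' : ¬ p ^ (e + 1) ∣ m) (hqf : q ^ f ∣ m) (hqf' : ¬ q ^ (f + 1) ∣ m) :
    (e + 1) * (f + 1) ∣ m.divisors.card := by
  have hcop : Nat.Coprime (p ^ e) (q ^ f) :=
    Nat.Coprime.pow _ _ ((Nat.coprime_primes hp hq).2 hpq)
  obtain ⟨r, rfl⟩ := hcop.mul_dvd_of_dvd_of_dvd hpe hqf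
  have hpr : ¬ p ∣ r := fun ⟨s, hs⟩ => hpe' ⟨q ^ f * s, by rw [hs]; ring⟩
  have hqr : ¬ q ∣ r := fun ⟨s, hs⟩ => hqf' ⟨p ^ e * s, by rw [hs]; ring⟩
  have hcop' : Nat.Coprime (p ^ e * q ^ f) r :=
    Nat.Coprime.mul_left (((Nat.Prime.coprime_iff_not_dvd hp).2 hpr).pow_left _)
      (((Nat.Prime.coprime_iff_not_dvd hq).2 hqr).pow_left _)
  rw [hcop'.card_divisors_mul, hcop.card_divisors_mul, Nat.divisors_prime_pow hp,
    Nat.divisors_prime_pow hq]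
  simp

lemma Interlocking.four_or_six_dvd {m k : ℕ} (h : Interlocking m (2 ^ k)) (hk : 4 ≤ k) :
    4 ∣ m.divisors.card ∨ 6 ∣ m.divisors.card := by
  have h2 := h.not_two_dvd hk
  have h3 := h.three_dvd hk
  have h3' : 3 ^ 1 ∣ m := by simpa using h3
  obtain ⟨e, he, he1, he2⟩ := h.exists_dvd 2 (by norm_num) (by omega)
  have h57 : 5 ∣ m ∨ 7 ∣ m := by
    have h6 : ¬ 6 ∣ m := fun h6 => h2 (dvd_trans (by norm_num) h6)
    norm_num at he1 he2
    interval_cases e <;> simp_all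
  by_cases h5 : 5 ∣ m
  · have h15 : 15 ∣ m := by omega
    have h9 : ¬ 3 ^ (1 + 1) ∣ m := fun h9 => h.not_both 3 h9 h15
      (by norm_num) (by norm_num) (by norm_num) (by norm_num)
    by_cases h25 : 5 ^ (1 + 1) ∣ m
    · have h75 : 75 ∣ m := by omega
      have h125 : ¬ 5 ^ (2 + 1) ∣ m := fun h125 => h.not_both 6 h75 h125
        (by norm_num) (by norm_num) (by norm_num) (by norm_num)
      exact Or.inr (mul_dvd_card_divisors Nat.prime_three Nat.prime_five (by norm_num)
        h3' h9 h25 h125)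
    · exact Or.inl (mul_dvd_card_divisors Nat.prime_three Nat.prime_five (by norm_num)
        h3' h9 (by simpa using h5) h25)
  · have h7 : 7 ∣ m := h57.resolve_left h5
    have h7' : 7 ^ 1 ∣ m := by simpa using h7
    have h21 : 21 ∣ m := by omega
    by_cases h9 : 3 ^ 2 ∣ m
    · have h63 : 63 ∣ m := by omega
      have h27 : ¬ 3 ^ (2 + 1) ∣ m := fun h27 => h.not_both 4 h21 h27
        (by norm_num) (by norm_num) (by norm_num) (by norm_num)
      have h49 : ¬ 7 ^ (1 + 1) ∣ m := fun h49 => h.not_both 5 h49 h63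
        (by norm_num) (by norm_num) (by norm_num) (by norm_num)
      exact Or.inr (mul_dvd_card_divisors Nat.prime_three (by norm_num) (by norm_num)
        h9 h27 h7' h49)
    · have h49 : ¬ 7 ^ (1 + 1) ∣ m := by
        intro h49
        -- the divisor in `(8, 16)` is `11` or `13`, so `33` or `39` divides `m`
        obtain ⟨c, hc, hc1, hc2⟩ := h.exists_dvd 3 (by norm_num) (by omega)
        have h1113 : 33 ∣ m ∨ 39 ∣ m := by
          norm_num at hc1 hc2
          interval_cases c <;> omega
        rcases h1113 with h33 | h39
        · exact h.not_both 5 h33 h49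
            (by norm_num) (by norm_num) (by norm_num) (by norm_num)
        · exact h.not_both 5 h39 h49
            (by norm_num) (by norm_num) (by norm_num) (by norm_num)
      exact Or.inl (mul_dvd_card_divisors Nat.prime_three (by norm_num) (by norm_num)
        h3' h9 h7' h49)

lemma not_separable_two_pow {k : ℕ} (hk : 4 ≤ k)
    (hmod : k % 12 = 1 ∨ k % 12 = 2 ∨ k % 12 = 9 ∨ k % 12 = 10) : ¬ Separable (2 ^ k) := by
  rintro ⟨m, h⟩
  have h1 := h.card_divisors hk
  have h2 := h.four_or_six_dvd hk
  omega

/-! ### Density -/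

lemma count_residues (q : ℕ) :
    Nat.count (fun k => k % 12 = 1 ∨ k % 12 = 2 ∨ k % 12 = 9 ∨ k % 12 = 10) (12 * q) = 4 * q := by
  induction q with
  | zero => simp
  | succ q ih =>
    rw [mul_add, Nat.count_add, ih]
    simp only [Nat.mul_add_mod]
    simp [Nat.count_succ]
    omega

lemma le_card_not_separable (x : ℕ) :
    x ≤ 3 * ((Finset.Icc 1 x).filter fun k => ¬ Separable (2 ^ k)).card + 24 := by
  have h1 := count_residues (x / 12)
  rw [Nat.count_eq_card_filter_range] at h1
  have h2 : (Finset.range (12 * (x / 12))).filter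
      (fun k => k % 12 = 1 ∨ k % 12 = 2 ∨ k % 12 = 9 ∨ k % 12 = 10) ⊆
      ((Finset.Icc 1 x).filter fun k => ¬ Separable (2 ^ k)) ∪ {1, 2} := by
    intro k hk
    simp only [Finset.mem_filter, Finset.mem_range] at hk
    simp only [Finset.mem_union, Finset.mem_filter, Finset.mem_Icc, Finset.mem_insert,
      Finset.mem_singleton]
    by_cases h4 : 4 ≤ k
    · exact Or.inl ⟨by omega, not_separable_two_pow h4 hk.2⟩
    · omega
  have h3 := (Finset.card_le_card h2).trans (Finset.card_union_le _ _)
  have h4 : ({1, 2} : Finset ℕ).card = 2 := rfl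
  omega

/-- The set of positive integers `k` such that `2^k` is not separable has lower
asymptotic density at least `1/3`. -/
theorem lowerDensity_two_pow_not_separable :
    (1 : ℝ) / 3 ≤ Filter.liminf
      (fun x : ℕ => (((Finset.Icc 1 x).filter fun k => ¬ Separable (2 ^ k)).card : ℝ) / x)
      Filter.atTop := by
  have hlim : Filter.Tendsto (fun x : ℕ => (1 : ℝ) / 3 - 8 / x) Filter.atTop (nhds (1 / 3)) := by
    simpa using tendsto_const_nhds.sub (tendsto_const_div_atTop_nhds_zero_nat (8 : ℝ))
  rw [← hlim.liminf_eq]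
  refine Filter.liminf_le_liminf ?_ hlim.isBoundedUnder_ge ?_
  · filter_upwards [Filter.eventually_gt_atTop 0] with x hx
    have hx' : (0 : ℝ) < x := by exact_mod_cast hx
    have h : (x : ℝ) ≤
        3 * ((Finset.Icc 1 x).filter fun k => ¬ Separable (2 ^ k)).card + 24 := by
      exact_mod_cast le_card_not_separable x
    rw [le_div_iff₀ hx', sub_mul, div_mul_cancel₀ _ hx'.ne']
    linarith
  · -- the densities are at most `1`
    refine Filter.IsBoundedUnder.isCoboundedUnder_ge
      (Filter.isBoundedUnder_of ⟨1, fun x => div_le_one_of_le₀ ?_ (Nat.cast_nonneg x)⟩)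
    have := Finset.card_filter_le (Finset.Icc 1 x) fun k => ¬ Separable (2 ^ k)
    rw [Nat.card_Icc, Nat.add_sub_cancel] at this
    exact_mod_cast this
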